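/- arXiv:1504.06963 — 2 statements merged into one kernel-verified Lean document; each statement's English description precedes it below -/
import Mathlib

section
/- For Herman's protocol on a cycle of N ≥ 3 nodes started from any configuration x with an odd number of tokens, setting ε := sin²(π/(2N)), one has E((1/(1−ε))^T) ≤ 3/2. Moreover, equality holds if and only if N is divisible by 3 and x consists of exactly three tokens whose three arc-distances all equal N/3. -/
/-!
Order the tokens as `y₁ < ⋯ < y_K` and put `ζ = exp(iπ/N)`, so that `ζ ^ N = -1`. The alternating sum
`Z = ∑ⱼ (-1)ʲ ζ ^ yⱼ` does not notice the removal of a colliding pair, and for odd `K` it changes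
only by a sign when a token crosses the origin. Since the tokens move independently, one step gives

  `E ‖Z'‖² = (1 - ε) ‖Z‖² + ε K`,  with `1 - ε = ‖(1 + ζ) / 2‖²` and `ε = ‖(1 - ζ) / 2‖²`.

Hence the potential `h = (3 - ‖Z‖²) / 2` satisfies `E h(X₁) = (1 - ε) h - ε (K - 3) / 2`. It equals
`1` when `K = 1` and never exceeds `3 / 2`; summation by parts shows `‖Z‖ ≤ N sin (π / (2 N)) ≤ π / 2`,
so it is also at least `1 / 4`. With `λ = 1 / (1 - ε)`, the process `λ ^ t h(X_t)`, stopped at `T`,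
is therefore a nonnegative supermartingale, which gives
`∑_{s ≤ t} λ ^ s P(T = s) + λ ^ t P(T > t) / 4 ≤ h(x)` (`truncated_le`) and so `E λ^T ≤ h(x) ≤ 3 / 2`.
For `K ≥ 5` the first step already loses a fixed positive amount (`truncated_succ_le`), while for
`K ≤ 3` the process is a martingale and `E λ^T = h(x)` (`le_truncated`, together with
`λ ^ t P(T > t) → 0`). Equality with `3 / 2` thus means `K = 3` and `Z = 0`
(`expFT_eq_iff`); three unit vectors `1, -ζ ^ m, ζ ^ n` with `m < n < N` sum to zero exactly when
`m = N / 3` and `n = 2 N / 3` (`zeta_relation_iff`).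

The alternating signs are carried by a unit-modulus function `a` on the cycle (`Lift`), obtained by
multiplying by `ζ` at each node and by an additional `-1` when passing a token. Going once around
the cycle multiplies by `(-1) ^ K ζ ^ N`, so such an `a` exists exactly when `K` is odd.
-/

open scoped BigOperators

namespace HermanProtocol

/-- One step of Herman's protocol on the cycle `ℤ/N` (modelled by `Fin N`),
given coin flips `c` : the token at node `v` moves to its clockwise neighbour
`v + 1` if `c v = true` and stays at `v` otherwise; if two tokens land on the
same node (at most two ever can), both are removed, so a node is occupied
afterwards iff exactly one token lands on it. -/
def step (N : ℕ) [NeZero N] (c : Fin N → Bool) (S : Finset (Fin N)) :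
    Finset (Fin N) :=
  Finset.univ.filter fun w : Fin N =>
    (S.filter fun v => (if c v then v + 1 else v) = w).card = 1

/-- The configuration `X_t` at time `t`, given the initial configuration `x`
and the coin flips `ω s v` (the coin used by the token sitting at node `v` at
time `s`); the tokens move independently since they sit at distinct nodes. -/
def conf (N : ℕ) [NeZero N] (x : Finset (Fin N)) (ω : ℕ → Fin N → Bool) :
    ℕ → Finset (Fin N)
  | 0 => x
  | t + 1 => step N (ω t) (conf N x ω t)

/-- Extend a finite coin history to an infinite one (by `false` after time `t`). -/
def pad (N t : ℕ) (ω : Fin t → Fin N → Bool) : ℕ → Fin N → Bool :=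
  fun s => if h : s < t then ω ⟨s, h⟩ else fun _ => false

/-- `P(T > t)`: the probability (with all coins fair and independent) that the
process has not yet reached a one-token state at time `t`.  Since `X_t` depends
only on the coins of the first `t` steps, this is a finite count. -/
noncomputable def survival (N : ℕ) [NeZero N] (x : Finset (Fin N)) (t : ℕ) : ℝ :=
  ((Finset.univ.filter fun ω : Fin t → Fin N → Bool =>
      (conf N x (pad N t ω) t).card ≠ 1).card : ℝ) / 2 ^ (t * N)

/-- `P(T = t)`, the probability that the stabilization time
`T = min {t | K_t = 1}` equals `t` (the number of tokens `K_t` is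
non-increasing, so `{T = t} = {T > t - 1} \ {T > t}`). -/
noncomputable def probTeq (N : ℕ) [NeZero N] (x : Finset (Fin N)) : ℕ → ℝ
  | 0 => 1 - survival N x 0
  | t + 1 => survival N x t - survival N x (t + 1)

/-- The expectation `E(f(T)) = ∑_t f(t)·P(T = t)` of a function of the
stabilization time. -/
noncomputable def expFT (N : ℕ) [NeZero N] (x : Finset (Fin N)) (f : ℕ → ℝ) : ℝ :=
  ∑' t : ℕ, f t * probTeq N x t

/-- `x` is a three-token configuration whose three arc-distances all equal
`N/3` (in particular `3 ∣ N`). -/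
def Equidistant3 (N : ℕ) (x : Finset (Fin N)) : Prop :=
  3 ∣ N ∧ ∃ p₁ p₂ p₃ : Fin N, p₁ < p₂ ∧ p₂ < p₃ ∧ x = {p₁, p₂, p₃} ∧
    p₂.val - p₁.val = N / 3 ∧ p₃.val - p₂.val = N / 3 ∧
    N - (p₃.val - p₁.val) = N / 3

section

/-! ### Lifts of configurations -/

/-- The primitive `2N`-th root of unity `exp(iπ/N)`. -/
noncomputable def zeta (N : ℕ) : ℂ := Complex.exp ((Real.pi / N : ℝ) * Complex.I)

/-- `a v` is, up to a global unit factor, `(-1) ^ (number of tokens before v) * ζ ^ v`. The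
recursion along the cycle encodes this without reference to an origin. -/
structure Lift (N : ℕ) [NeZero N] (S : Finset (Fin N)) (a : Fin N → ℂ) : Prop where
  norm_eq : ∀ v, ‖a v‖ = 1
  succ : ∀ v, a (v + 1) = (if v ∈ S then -zeta N else zeta N) * a v

/-- The alternating sum `Z` of the configuration `S`, with signs and phases given by a lift `a`. -/
noncomputable def tokenSum (N : ℕ) (S : Finset (Fin N)) (a : Fin N → ℂ) : ℂ := ∑ v ∈ S, a v

/-- The lift of the configuration after one step: the sign at `v` flips exactly when a token moves
from `v - 1` to `v`, so that it no longer lies before `v`. -/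
noncomputable def stepLift (N : ℕ) [NeZero N] (c : Fin N → Bool) (S : Finset (Fin N))
    (a : Fin N → ℂ) : Fin N → ℂ := fun v => if c (v - 1) = true ∧ v - 1 ∈ S then -a v else a v

lemma norm_zeta (N : ℕ) : ‖zeta N‖ = 1 := Complex.norm_exp_ofReal_mul_I _

lemma zeta_ne_zero (N : ℕ) : zeta N ≠ 0 := Complex.exp_ne_zero _

lemma zeta_pow (N k : ℕ) :
    zeta N ^ k = Complex.exp ((k * (Real.pi / N) : ℝ) * Complex.I) := by
  rw [zeta, ← Complex.exp_nat_mul]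
  congr 1
  push_cast
  ring

lemma zeta_pow_self (N : ℕ) [NeZero N] : zeta N ^ N = -1 := by
  have h : (N : ℝ) ≠ 0 := Nat.cast_ne_zero.mpr (NeZero.ne N)
  rw [zeta_pow, mul_div_cancel₀ _ h, Complex.exp_pi_mul_I]

lemma zeta_re (N : ℕ) : (zeta N).re = 1 - 2 * Real.sin (Real.pi / (2 * N)) ^ 2 := by
  rw [zeta, Complex.exp_ofReal_mul_I_re,
    show Real.pi / (N : ℝ) = 2 * (Real.pi / (2 * N)) by ring, Real.cos_two_mul, Real.sin_sq]
  ring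

lemma norm_zeta_sub_one_sq (N : ℕ) :
    ‖(zeta N - 1) / 2‖ ^ 2 = Real.sin (Real.pi / (2 * N)) ^ 2 := by
  have h := norm_zeta N
  rw [← sq_eq_sq₀ (norm_nonneg _) zero_le_one, Complex.sq_norm, Complex.normSq_apply] at h
  have h2 := zeta_re N
  rw [norm_div, div_pow, Complex.sq_norm, Complex.normSq_apply]
  simp
  linarith

lemma norm_zeta_add_one_sq (N : ℕ) :
    ‖(zeta N + 1) / 2‖ ^ 2 = 1 - Real.sin (Real.pi / (2 * N)) ^ 2 := by
  have h := norm_zeta N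
  rw [← sq_eq_sq₀ (norm_nonneg _) zero_le_one, Complex.sq_norm, Complex.normSq_apply] at h
  have h2 := zeta_re N
  rw [norm_div, div_pow, Complex.sq_norm, Complex.normSq_apply]
  simp
  linarith

set_option linter.unusedSectionVars false

variable {N : ℕ} [NeZero N]

lemma succ_ne_self (hN : 3 ≤ N) (v : Fin N) : v + 1 ≠ v := by
  intro h
  have h1 : (1 : Fin N) = 0 := by simpa using h
  have := congrArg Fin.val h1
  rw [Fin.val_one', Fin.val_zero, Nat.mod_eq_of_lt (by omega)] at this
  omega

lemma sum_shift {M : Type*} [AddCommMonoid M] (f : Fin N → M) : ∑ v, f (v + 1) = ∑ v, f v :=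
  Equiv.sum_comp (Equiv.addRight (1 : Fin N)) f

lemma mem_step_succ (hN : 3 ≤ N) (c : Fin N → Bool) (S : Finset (Fin N)) (v : Fin N) :
    v + 1 ∈ step N c S ↔ Xor (c v = true ∧ v ∈ S) (¬ c (v + 1) = true ∧ v + 1 ∈ S) := by
  have hv := succ_ne_self hN v
  have key : (S.filter fun u => (if c u then u + 1 else u) = v + 1) =
      (({v} : Finset (Fin N)).filter fun u => c u = true ∧ u ∈ S) ∪
      (({v + 1} : Finset (Fin N)).filter fun u => ¬ c u = true ∧ u ∈ S) := by
    ext u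
    simp only [Finset.mem_filter, Finset.mem_union, Finset.mem_singleton]
    by_cases hc : c u = true
    · simp [hc]; tauto
    · simp [hc]; tauto
  simp only [step, Finset.mem_filter, Finset.mem_univ, true_and]
  rw [key, Finset.card_union_of_disjoint, Finset.filter_singleton, Finset.filter_singleton]
  · by_cases h1 : c v = true ∧ v ∈ S <;> by_cases h2 : ¬ c (v + 1) = true ∧ v + 1 ∈ S <;>
      simp only [h1, h2, if_false] <;> simp [Xor]
  · exact Finset.disjoint_filter_filter (by simpa using hv.symm)

lemma card_step_le (c : Fin N → Bool) (S : Finset (Fin N)) : (step N c S).card ≤ S.card := by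
  refine (Finset.card_le_card (t := S.image fun v => if c v then v + 1 else v) ?_).trans
    Finset.card_image_le
  intro w hw
  simp only [step, Finset.mem_filter, Finset.mem_univ, true_and] at hw
  obtain ⟨u, hu⟩ := Finset.card_pos.mp (hw ▸ Nat.one_pos)
  rw [Finset.mem_filter] at hu
  exact Finset.mem_image.mpr ⟨u, hu⟩

lemma card_step_of_card_one (c : Fin N → Bool) {S : Finset (Fin N)} (h : S.card = 1) :
    (step N c S).card = 1 := by
  obtain ⟨v, rfl⟩ := Finset.card_eq_one.mp h
  rw [Finset.card_eq_one]
  refine ⟨if c v then v + 1 else v, ?_⟩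
  ext w
  simp only [step, Finset.mem_filter, Finset.mem_univ, true_and, Finset.filter_singleton,
    Finset.mem_singleton]
  rw [eq_comm (a := w)]
  split_ifs <;> simp_all

lemma Lift.step (hN : 3 ≤ N) {S : Finset (Fin N)} {a : Fin N → ℂ} (h : Lift N S a)
    (c : Fin N → Bool) : Lift N (step N c S) (stepLift N c S a) := by
  constructor
  · intro v
    unfold stepLift
    split_ifs <;> simp [h.norm_eq]
  · intro v
    obtain ⟨u, rfl⟩ : ∃ u, v = u + 1 := ⟨v - 1, by simp⟩
    have h2 := h.succ (u + 1)
    simp only [stepLift, add_sub_cancel_right]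
    rw [h2]
    by_cases h3 : c u = true <;> by_cases h4 : u ∈ S <;> by_cases h5 : c (u + 1) = true <;>
      by_cases h6 : u + 1 ∈ S <;> simp [mem_step_succ hN, Xor, h3, h4, h5, h6]

/-- Summation by parts: the sum over tokens in terms of the sum over all nodes. -/
lemma two_mul_tokenSum {S : Finset (Fin N)} {a : Fin N → ℂ} (h : Lift N S a) :
    2 * zeta N * tokenSum N S a = (zeta N - 1) * ∑ v, a v := by
  have h1 : ∀ v, (if v ∈ S then 2 * zeta N * a v else 0) = zeta N * a v - a (v + 1) := by
    intro v
    rw [h.succ]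
    split_ifs <;> ring
  have h2 := Finset.sum_ite_mem Finset.univ S fun v => 2 * zeta N * a v
  rw [Finset.univ_inter] at h2
  rw [tokenSum, Finset.mul_sum, ← h2, Finset.sum_congr rfl fun v _ => h1 v,
    Finset.sum_sub_distrib, sum_shift, ← Finset.mul_sum]
  ring

/-! ### The drift of the potential -/

/-- The effect of one step on `Z`, with the coins written as signs `±1`. Each token at `v`
contributes `ζ * a v` if it moves and `a v` if it stays, including tokens that are removed. -/
lemma tokenSum_step (hN : 3 ≤ N) {S : Finset (Fin N)} {a : Fin N → ℂ} (h : Lift N S a)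
    (c : Fin N → Bool) :
    tokenSum N (step N c S) (stepLift N c S a) = (zeta N + 1) / 2 * tokenSum N S a +
      (zeta N - 1) / 2 * ∑ v ∈ S, (if c v then 1 else -1) * a v := by
  have h1 := two_mul_tokenSum (h.step hN c)
  have h2 := two_mul_tokenSum h
  have h3 : ∀ v, stepLift N c S a (v + 1) =
      a (v + 1) + (if v ∈ S then zeta N * ((if c v then 1 else -1) * a v + a v) else 0) := by
    intro v
    simp only [stepLift, add_sub_cancel_right, h.succ v]
    by_cases h3 : c v = true <;> by_cases h4 : v ∈ S <;> simp [h3, h4]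
    ring
  have h4 := Finset.sum_ite_mem Finset.univ S
    fun v => zeta N * ((if c v then 1 else -1) * a v + a v)
  rw [Finset.univ_inter] at h4
  rw [← sum_shift (stepLift N c S a), Finset.sum_congr rfl fun v _ => h3 v,
    Finset.sum_add_distrib, h4, ← Finset.mul_sum, Finset.sum_add_distrib, sum_shift, mul_add,
    ← h2] at h1
  apply mul_left_cancel₀ (mul_ne_zero two_ne_zero (zeta_ne_zero N))
  rw [h1]
  simp only [tokenSum]
  ring

/-- Averaging over the coin at `v` is the parallelogram law, paired by flipping that coin. -/
lemma sum_norm_sq_add_sign (v : Fin N) (X : (Fin N → Bool) → ℂ) (y : ℂ)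
    (hX : ∀ c b, X (Function.update c v b) = X c) :
    ∑ c : Fin N → Bool, ‖X c + (if c v then 1 else -1) * y‖ ^ 2 =
      ∑ c : Fin N → Bool, (‖X c‖ ^ 2 + ‖y‖ ^ 2) := by
  have hinv : Function.Involutive fun c : Fin N → Bool => Function.update c v (!c v) := by
    intro c; simp
  have h1 := Equiv.sum_comp (hinv.toPerm _)
    fun c : Fin N → Bool => ‖X c + (if c v then 1 else -1) * y‖ ^ 2
  have h2 : ∀ c : Fin N → Bool, ‖X c + (if c v then 1 else -1) * y‖ ^ 2 +
      ‖X (hinv.toPerm _ c) + (if (hinv.toPerm _ c) v then 1 else -1) * y‖ ^ 2 =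
      2 * (‖X c‖ ^ 2 + ‖y‖ ^ 2) := by
    intro c
    have hp := parallelogram_law_with_norm ℝ (X c) y
    simp only [Function.Involutive.coe_toPerm, hX, Function.update_self]
    cases c v <;> simp [← sub_eq_add_neg] <;> nlinarith
  have h3 := Finset.sum_congr rfl fun c (_ : c ∈ Finset.univ) => h2 c
  rw [Finset.sum_add_distrib, h1, ← Finset.mul_sum] at h3
  linarith

/-- Second moment of a sum with independent fair signs. -/
lemma sum_norm_sq_signs (P Q : ℂ) (a : Fin N → ℂ) (ha : ∀ v, ‖a v‖ = 1) (S : Finset (Fin N)) :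
    ∑ c : Fin N → Bool, ‖P + Q * ∑ v ∈ S, (if c v then 1 else -1) * a v‖ ^ 2 =
      2 ^ N * (‖P‖ ^ 2 + ‖Q‖ ^ 2 * S.card) := by
  induction S using Finset.induction_on with
  | empty => simp
  | insert v S hv ih =>
    have h1 := sum_norm_sq_add_sign v
      (fun c => P + Q * ∑ v ∈ S, (if c v then 1 else -1) * a v) (Q * a v) (by
        intro c b
        congr 2
        refine Finset.sum_congr rfl fun u hu => ?_
        rw [Function.update_of_ne (by rintro rfl; exact hv hu)])
    rw [Finset.sum_add_distrib, ih] at h1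
    rw [Finset.card_insert_of_notMem hv]
    calc _ = _ := Finset.sum_congr rfl fun c _ => by
            rw [Finset.sum_insert hv]
            congr 2
            ring
      _ = _ := h1
      _ = _ := by simp [ha]; ring

/-- The supermartingale function `h = (3 - ‖Z‖²) / 2`. -/
noncomputable def potential (N : ℕ) (S : Finset (Fin N)) (a : Fin N → ℂ) : ℝ :=
  (3 - ‖tokenSum N S a‖ ^ 2) / 2

/-- The drift of the potential: it contracts by `1 - ε`, up to a term of the sign of `3 - K`. -/
lemma sum_potential_step (hN : 3 ≤ N) {S : Finset (Fin N)} {a : Fin N → ℂ} (h : Lift N S a) :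
    ∑ c : Fin N → Bool, potential N (step N c S) (stepLift N c S a) =
      2 ^ N * ((1 - Real.sin (Real.pi / (2 * N)) ^ 2) * potential N S a -
        Real.sin (Real.pi / (2 * N)) ^ 2 * (S.card - 3) / 2) := by
  have h1 := sum_norm_sq_signs ((zeta N + 1) / 2 * tokenSum N S a) ((zeta N - 1) / 2) a
    h.norm_eq S
  rw [norm_mul, mul_pow, norm_zeta_add_one_sq, norm_zeta_sub_one_sq] at h1
  simp only [potential, tokenSum_step hN h]
  rw [← Finset.sum_div, Finset.sum_sub_distrib, h1]
  simp
  ring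

lemma potential_le (S : Finset (Fin N)) (a : Fin N → ℂ) : potential N S a ≤ 3 / 2 := by
  unfold potential
  nlinarith [sq_nonneg ‖tokenSum N S a‖]

/-- The potential is bounded away from zero, as `‖Z‖ ≤ N sin (π / (2 N)) ≤ π / 2 < √(5/2)`. -/
lemma le_potential {S : Finset (Fin N)} {a : Fin N → ℂ} (h : Lift N S a) :
    1 / 4 ≤ potential N S a := by
  have hN : (0 : ℝ) < N := Nat.cast_pos.mpr (Nat.pos_of_ne_zero (NeZero.ne N))
  have h1 : tokenSum N S a = (zeta N)⁻¹ * ((zeta N - 1) / 2) * ∑ v, a v := by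
    have := two_mul_tokenSum h
    field_simp [zeta_ne_zero N]
    linear_combination this
  have h2 : ‖∑ v, a v‖ ≤ N := by
    refine (norm_sum_le _ _).trans ?_
    simp [h.norm_eq]
  have hx : 0 ≤ Real.pi / (2 * N) := by positivity
  have hs : Real.sin (Real.pi / (2 * N)) ^ 2 ≤ (Real.pi / (2 * N)) ^ 2 := by
    rw [sq_le_sq]
    exact Real.abs_sin_le_abs
  have h3 : ‖tokenSum N S a‖ ^ 2 ≤ (Real.pi / (2 * N)) ^ 2 * N ^ 2 := by
    rw [h1, norm_mul, norm_mul, norm_inv, norm_zeta, mul_pow, mul_pow, norm_zeta_sub_one_sq]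
    simp only [inv_one, one_pow, one_mul]
    gcongr
  have h4 : (Real.pi / (2 * N)) ^ 2 * N ^ 2 = Real.pi ^ 2 / 4 := by
    field_simp
    norm_num
  have h5 := Real.pi_lt_d2
  have h6 := Real.pi_pos
  unfold potential
  nlinarith

/-- Configurations with an odd number of tokens have a lift. At the wrap-around from `N - 1` to `0`
the oddness of `S.card` compensates `ζ ^ N = -1`. -/
lemma lift_rank {S : Finset (Fin N)} (hodd : Odd S.card) :
    Lift N S fun v => (-1) ^ (S.filter fun u => u < v).card * zeta N ^ v.val := by
  constructor
  · intro v
    simp [norm_zeta]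
  · intro v
    have hz := zeta_pow_self N
    obtain ⟨n, rfl⟩ : ∃ n, N = n + 1 := ⟨N - 1, by have := NeZero.ne N; omega⟩
    have key : (-1 : ℂ) ^ (S.filter fun u => u ≤ v).card =
        (if v ∈ S then -1 else 1) * (-1) ^ (S.filter fun u => u < v).card := by
      have : (S.filter fun u => u ≤ v) =
          (S.filter fun u => u < v) ∪ (({v} : Finset (Fin (n + 1))).filter fun u => u ∈ S) := by
        ext u
        simp only [Finset.mem_filter, Finset.mem_union, Finset.mem_singleton]
        grind
      rw [this, Finset.card_union_of_disjoint, Finset.filter_singleton, pow_add]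
      · split_ifs <;> simp
      · rw [Finset.disjoint_left]
        simp +contextual [ne_of_lt]
    rcases eq_or_ne v (Fin.last n) with rfl | hv
    · have h2 : (S.filter fun u => u ≤ Fin.last n) = S :=
        Finset.filter_true_of_mem fun u _ => Fin.le_last u
      rw [h2, hodd.neg_one_pow] at key
      rw [Fin.last_add_one]
      simp only [Fin.not_lt_zero, Finset.filter_false, Finset.card_empty, Fin.val_zero, pow_zero,
        Fin.val_last]
      rw [pow_succ] at hz
      split_ifs at key ⊢ <;>
        linear_combination zeta (n + 1) ^ (n + 1) * key + hz
    · have hlt : v < Fin.last n := lt_of_le_of_ne (Fin.le_last v) hv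
      have h2 : (S.filter fun u => u < v + 1) = S.filter fun u => u ≤ v := by
        refine Finset.filter_congr fun u _ => ?_
        rw [Fin.lt_def, Fin.val_add_one_of_lt hlt, Fin.le_def]
        omega
      rw [h2, key, Fin.val_add_one_of_lt hlt, pow_succ]
      split_ifs <;> ring

/-! ### First-step analysis of the stabilization time -/

/-- First-step decomposition of the trajectory. -/
lemma conf_succ (x : Finset (Fin N)) (ω : ℕ → Fin N → Bool) (t : ℕ) :
    conf N x ω (t + 1) = conf N (step N (ω 0) x) (fun s => ω (s + 1)) t := by
  induction t with
  | zero => rfl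
  | succ t ih => rw [conf, ih]; rfl

lemma survival_succ (x : Finset (Fin N)) (t : ℕ) :
    survival N x (t + 1) = (∑ c : Fin N → Bool, survival N (step N c x) t) / 2 ^ N := by
  have hpad : ∀ (c : Fin N → Bool) (ω : Fin t → Fin N → Bool),
      conf N x (pad N (t + 1) (Fin.cons c ω)) (t + 1) = conf N (step N c x) (pad N t ω) t := by
    intro c ω
    rw [conf_succ]
    congr 1
    funext s
    simp only [pad, Nat.add_lt_add_iff_right]
    split_ifs with h
    · exact Fin.cons_succ (α := fun _ => Fin N → Bool) c ω ⟨s, h⟩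
    · rfl
  have hcard : ((Finset.univ.filter fun ω : Fin (t + 1) → Fin N → Bool =>
      (conf N x (pad N (t + 1) ω) (t + 1)).card ≠ 1).card : ℝ) =
      ∑ c : Fin N → Bool, ((Finset.univ.filter fun ω : Fin t → Fin N → Bool =>
      (conf N (step N c x) (pad N t ω) t).card ≠ 1).card : ℝ) := by
    simp only [Finset.card_filter, Nat.cast_sum]
    rw [← Fintype.sum_prod_type',
      ← Equiv.sum_comp (Fin.consEquiv fun _ : Fin (t + 1) => Fin N → Bool)]
    refine Finset.sum_congr rfl fun p _ => ?_
    simp only [Fin.consEquiv, Equiv.coe_fn_mk, hpad]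
  unfold survival
  rw [hcard, ← Finset.sum_div, div_div, add_mul, one_mul, pow_add]

lemma survival_zero_of_one {x : Finset (Fin N)} (h : x.card = 1) (t : ℕ) :
    survival N x t = 0 := by
  induction t generalizing x with
  | zero => simp [survival, conf, h]
  | succ t ih =>
    rw [survival_succ, Finset.sum_eq_zero fun c _ => ih (card_step_of_card_one c h), zero_div]

lemma survival_zero_of_ne {x : Finset (Fin N)} (h : x.card ≠ 1) : survival N x 0 = 1 := by
  simp [survival, conf, h]

lemma survival_nonneg (x : Finset (Fin N)) (t : ℕ) : 0 ≤ survival N x t := by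
  unfold survival; positivity

lemma survival_zero_le (x : Finset (Fin N)) : survival N x 0 ≤ 1 := by
  by_cases h : x.card = 1
  · rw [survival_zero_of_one h]; exact zero_le_one
  · exact (survival_zero_of_ne h).le

lemma sum_coins_const (r : ℝ) : (∑ _c : Fin N → Bool, r) / 2 ^ N = r := by
  simp

lemma survival_succ_le (x : Finset (Fin N)) (t : ℕ) : survival N x (t + 1) ≤ survival N x t := by
  by_cases h : x.card = 1
  · rw [survival_zero_of_one h, survival_zero_of_one h]
  induction t generalizing x with
  | zero =>
    rw [survival_zero_of_ne h, survival_succ, ← sum_coins_const (N := N) 1]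
    gcongr
    exact survival_zero_le _
  | succ t ih =>
    rw [survival_succ, survival_succ x t]
    gcongr with c
    by_cases h' : (step N c x).card = 1
    · rw [survival_zero_of_one h', survival_zero_of_one h']
    · exact ih _ h'

lemma probTeq_nonneg (x : Finset (Fin N)) (t : ℕ) : 0 ≤ probTeq N x t := by
  cases t with
  | zero => exact sub_nonneg.mpr (survival_zero_le x)
  | succ t => exact sub_nonneg.mpr (survival_succ_le x t)

lemma probTeq_succ {x : Finset (Fin N)} (h : x.card ≠ 1) (t : ℕ) :
    probTeq N x (t + 1) = (∑ c : Fin N → Bool, probTeq N (step N c x) t) / 2 ^ N := by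
  cases t with
  | zero =>
    simp only [probTeq]
    rw [Finset.sum_sub_distrib, sub_div, sum_coins_const, survival_succ, survival_zero_of_ne h]
  | succ t =>
    simp only [probTeq]
    rw [survival_succ x t, survival_succ x (t + 1), Finset.sum_sub_distrib, sub_div]

/-- `E(l ^ T; T ≤ t) + d * l ^ t * P(T > t)`: the expectation of `l ^ min(T, t)` with the reward `d`
instead of `1` on trajectories that have not stabilized by time `t`. -/
noncomputable def truncated (N : ℕ) [NeZero N] (l d : ℝ) (t : ℕ) (x : Finset (Fin N)) : ℝ :=
  ∑ s ∈ Finset.range (t + 1), l ^ s * probTeq N x s + d * (l ^ t * survival N x t)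

lemma truncated_of_one (l d : ℝ) (t : ℕ) {x : Finset (Fin N)} (h : x.card = 1) :
    truncated N l d t x = 1 := by
  simp [truncated, Finset.sum_range_succ', probTeq, survival_zero_of_one h]

lemma truncated_zero_of_ne (l d : ℝ) {x : Finset (Fin N)} (h : x.card ≠ 1) :
    truncated N l d 0 x = d := by
  simp [truncated, probTeq, survival_zero_of_ne h]

lemma truncated_succ_of_ne (l d : ℝ) (t : ℕ) {x : Finset (Fin N)} (h : x.card ≠ 1) :
    truncated N l d (t + 1) x =
      l * ((∑ c : Fin N → Bool, truncated N l d t (step N c x)) / 2 ^ N) := by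
  have h0 : probTeq N x 0 = 0 := by simp [probTeq, survival_zero_of_ne h]
  have h1 : ∑ s ∈ Finset.range (t + 1), l ^ (s + 1) * probTeq N x (s + 1) =
      l * ((∑ c : Fin N → Bool, ∑ s ∈ Finset.range (t + 1), l ^ s * probTeq N (step N c x) s) /
        2 ^ N) := by
    rw [Finset.sum_comm, Finset.sum_div, Finset.mul_sum]
    refine Finset.sum_congr rfl fun s _ => ?_
    rw [probTeq_succ h, ← Finset.mul_sum]
    ring
  have h2 : ∑ c : Fin N → Bool, d * (l ^ t * survival N (step N c x) t) =
      d * (l ^ t * ∑ c : Fin N → Bool, survival N (step N c x) t) := by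
    rw [Finset.mul_sum, Finset.mul_sum]
  simp only [truncated]
  rw [Finset.sum_range_succ', h0, h1, Finset.sum_add_distrib, h2, survival_succ]
  ring

lemma sin_sq_pos (hN : 3 ≤ N) : 0 < Real.sin (Real.pi / (2 * N)) ^ 2 := by
  have h3 : (3 : ℝ) ≤ N := by exact_mod_cast hN
  have hp := Real.pi_pos
  refine pow_pos (Real.sin_pos_of_pos_of_lt_pi (by positivity) ?_) 2
  rw [div_lt_iff₀ (by positivity)]
  nlinarith

lemma sin_sq_lt_one (hN : 3 ≤ N) : Real.sin (Real.pi / (2 * N)) ^ 2 < 1 := by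
  have h3 : (3 : ℝ) ≤ N := by exact_mod_cast hN
  have hp := Real.pi_pos
  have : 0 < Real.cos (Real.pi / (2 * N)) := by
    apply Real.cos_pos_of_mem_Ioo
    constructor
    · have : 0 < Real.pi / (2 * N) := by positivity
      linarith
    · gcongr
      linarith
  have h := Real.sin_sq_add_cos_sq (Real.pi / (2 * N))
  nlinarith [pow_pos this 2]

/-- The base `λ = 1 / (1 - ε)` of the exponential moment. -/
noncomputable def rate (N : ℕ) : ℝ := 1 / (1 - Real.sin (Real.pi / (2 * N)) ^ 2)

lemma rate_pos (hN : 3 ≤ N) : 0 < rate N :=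
  one_div_pos.mpr (sub_pos.mpr (sin_sq_lt_one hN))

lemma one_lt_rate (hN : 3 ≤ N) : 1 < rate N := by
  have := sin_sq_lt_one hN
  have := sin_sq_pos hN
  rw [rate, lt_div_iff₀ (by linarith)]
  linarith

lemma rate_mul_sum_potential_step (hN : 3 ≤ N) {S : Finset (Fin N)} {a : Fin N → ℂ}
    (h : Lift N S a) :
    rate N * ((∑ c : Fin N → Bool, potential N (step N c S) (stepLift N c S a)) / 2 ^ N) =
      potential N S a - rate N * Real.sin (Real.pi / (2 * N)) ^ 2 * (S.card - 3) / 2 := by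
  have := sin_sq_lt_one hN
  have h1 : (1 - Real.sin (Real.pi / (2 * N)) ^ 2) ≠ 0 := by linarith
  rw [sum_potential_step hN h, mul_div_cancel_left₀ _ (by positivity), rate]
  field_simp

lemma potential_of_one {S : Finset (Fin N)} {a : Fin N → ℂ} (h : Lift N S a) (hS : S.card = 1) :
    potential N S a = 1 := by
  obtain ⟨v, rfl⟩ := Finset.card_eq_one.mp hS
  simp [potential, tokenSum, h.norm_eq]
  norm_num


/-- Multiplying the recursion around the whole cycle gives `(-1) ^ K * ζ ^ N = 1`. In particular, as
lifts are preserved by `step`, so is the parity of the number of tokens. -/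
lemma Lift.odd {S : Finset (Fin N)} {a : Fin N → ℂ} (h : Lift N S a) : Odd S.card := by
  have h0 : ∏ v, a v ≠ 0 := Finset.prod_ne_zero_iff.mpr fun v _ hv => by
    have := h.norm_eq v
    simp [hv] at this
  have h1 : ∏ v, a (v + 1) = ∏ v, a v := Equiv.prod_comp (Equiv.addRight (1 : Fin N)) a
  have h2 : ∀ v, a (v + 1) = zeta N * (if v ∈ S then -1 else 1) * a v := by
    intro v
    rw [h.succ]
    split_ifs <;> ring
  have h3 := Finset.prod_ite_mem Finset.univ S fun _ => (-1 : ℂ)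
  rw [Finset.univ_inter, Finset.prod_const] at h3
  rw [Finset.prod_congr rfl fun v _ => h2 v, Finset.prod_mul_distrib, Finset.prod_mul_distrib, h3,
    Finset.prod_const, Finset.card_univ, Fintype.card_fin, zeta_pow_self] at h1
  have h4 := mul_right_cancel₀ h0 (h1.trans (one_mul _).symm)
  by_contra hodd
  rw [(Nat.not_odd_iff_even.mp hodd).neg_one_pow] at h4
  norm_num at h4

/-! ### Comparing the exponential moment with the potential -/

/-- Keeps the loss incurred in the first step, which is positive when there are at least five tokens. -/
lemma truncated_succ_le (hN : 3 ≤ N) {t : ℕ}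
    (ih : ∀ {S : Finset (Fin N)} {a : Fin N → ℂ}, Lift N S a →
      truncated N (rate N) (1 / 4) t S ≤ potential N S a)
    {S : Finset (Fin N)} {a : Fin N → ℂ} (h : Lift N S a) (hS : S.card ≠ 1) :
    truncated N (rate N) (1 / 4) (t + 1) S ≤
      potential N S a - rate N * Real.sin (Real.pi / (2 * N)) ^ 2 * (S.card - 3) / 2 := by
  have := rate_pos hN
  rw [← rate_mul_sum_potential_step hN h, truncated_succ_of_ne _ _ _ hS]
  gcongr with c
  exact ih (h.step hN c)

lemma truncated_le (hN : 3 ≤ N) (t : ℕ) {S : Finset (Fin N)} {a : Fin N → ℂ} (h : Lift N S a) :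
    truncated N (rate N) (1 / 4) t S ≤ potential N S a := by
  induction t generalizing S a with
  | zero =>
    by_cases hS : S.card = 1
    · rw [truncated_of_one _ _ _ hS, potential_of_one h hS]
    · rw [truncated_zero_of_ne _ _ hS]
      exact le_potential h
  | succ t ih =>
    by_cases hS : S.card = 1
    · rw [truncated_of_one _ _ _ hS, potential_of_one h hS]
    · refine (truncated_succ_le hN ih h hS).trans (sub_le_self _ ?_)
      have h3 : (3 : ℝ) ≤ S.card := by
        obtain ⟨k, hk⟩ := h.odd
        exact_mod_cast (by omega : 3 ≤ S.card)
      have := rate_pos hN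
      have : (0 : ℝ) ≤ S.card - 3 := by linarith
      positivity

/-- With at most three tokens the potential has no drift beyond the factor `1 - ε`, so the reward
`3 / 2`, an upper bound for the potential, gives the reverse inequality. -/
lemma le_truncated (hN : 3 ≤ N) (t : ℕ) {S : Finset (Fin N)} {a : Fin N → ℂ} (h : Lift N S a)
    (h3 : S.card ≤ 3) : potential N S a ≤ truncated N (rate N) (3 / 2) t S := by
  induction t generalizing S a with
  | zero =>
    by_cases hS : S.card = 1
    · rw [truncated_of_one _ _ _ hS, potential_of_one h hS]
    · rw [truncated_zero_of_ne _ _ hS]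
      exact potential_le _ _
  | succ t ih =>
    by_cases hS : S.card = 1
    · rw [truncated_of_one _ _ _ hS, potential_of_one h hS]
    · have hS3 : S.card = 3 := by
        obtain ⟨k, hk⟩ := h.odd
        omega
      have h1 := rate_mul_sum_potential_step hN h
      rw [hS3] at h1
      norm_num at h1
      have := rate_pos hN
      rw [← h1, truncated_succ_of_ne _ _ _ hS]
      gcongr with c
      exact ih (h.step hN c) ((card_step_le c S).trans h3)

open Filter Topology in
/-- The defining series of `E λ^T` converges, and `λ ^ t P(T > t)`, being at most its tail, tends to
zero. -/
lemma tendsto_truncated_parts (hN : 3 ≤ N) {x : Finset (Fin N)} {a : Fin N → ℂ} (h : Lift N x a) :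
    Tendsto (fun t => ∑ s ∈ Finset.range (t + 1), rate N ^ s * probTeq N x s) atTop
      (𝓝 (expFT N x fun t => rate N ^ t)) ∧
    Tendsto (fun t => rate N ^ t * survival N x t) atTop (𝓝 0) := by
  have hr := rate_pos hN
  have hr1 := one_lt_rate hN
  have hterm : ∀ s, 0 ≤ rate N ^ s * probTeq N x s := fun s =>
    mul_nonneg (by positivity) (probTeq_nonneg x s)
  have hB : ∀ t, 0 ≤ rate N ^ t * survival N x t := fun t =>
    mul_nonneg (by positivity) (survival_nonneg x t)
  have hA : ∀ t, 0 ≤ ∑ s ∈ Finset.range t, rate N ^ s * probTeq N x s := fun t =>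
    Finset.sum_nonneg fun s _ => hterm s
  have hbd : ∀ t, ∑ s ∈ Finset.range (t + 1), rate N ^ s * probTeq N x s +
      1 / 4 * (rate N ^ t * survival N x t) ≤ 3 / 2 := fun t =>
    (truncated_le hN t h).trans (potential_le _ _)
  have hsum : Summable fun s => rate N ^ s * probTeq N x s := by
    refine summable_of_sum_range_le (c := 3 / 2) hterm fun n => ?_
    have h1 := hbd n
    rw [Finset.sum_range_succ] at h1
    linarith [hterm n, hB n]
  have hlim : Tendsto (fun t => ∑ s ∈ Finset.range (t + 1), rate N ^ s * probTeq N x s) atTop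
      (𝓝 (expFT N x fun t => rate N ^ t)) :=
    hsum.hasSum.tendsto_sum_nat.comp (tendsto_add_atTop_nat 1)
  refine ⟨hlim, ?_⟩
  have hsurv : Tendsto (survival N x) atTop (𝓝 0) := by
    have h1 : Tendsto (fun t : ℕ => 6 * (rate N)⁻¹ ^ t) atTop (𝓝 0) := by
      simpa using (tendsto_pow_atTop_nhds_zero_of_lt_one (by positivity)
        (inv_lt_one_of_one_lt₀ hr1)).const_mul 6
    -- `λ ^ t P(T > t) / 4 ≤ 3 / 2`
    refine squeeze_zero (survival_nonneg x) (fun t => ?_) h1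
    rw [inv_pow, ← div_eq_mul_inv, le_div_iff₀ (by positivity)]
    linarith [hbd t, hA (t + 1)]
  have htail : ∀ t k, rate N ^ t * (survival N x t - survival N x (t + k)) ≤
      ∑ s ∈ Finset.range (t + k + 1), rate N ^ s * probTeq N x s -
        ∑ s ∈ Finset.range (t + 1), rate N ^ s * probTeq N x s := by
    intro t k
    induction k with
    | zero => simp
    | succ k ih =>
      rw [show t + (k + 1) + 1 = (t + k + 1) + 1 by ring, Finset.sum_range_succ]
      have h1 : rate N ^ t * probTeq N x (t + k + 1) ≤
          rate N ^ (t + k + 1) * probTeq N x (t + k + 1) :=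
        mul_le_mul_of_nonneg_right (pow_le_pow_right₀ hr1.le (by omega)) (probTeq_nonneg _ _)
      have h2 : probTeq N x (t + k + 1) = survival N x (t + k) - survival N x (t + (k + 1)) := rfl
      rw [h2] at h1 ⊢
      linarith
  have htail' : ∀ t, rate N ^ t * survival N x t ≤ (expFT N x fun t => rate N ^ t) -
      ∑ s ∈ Finset.range (t + 1), rate N ^ s * probTeq N x s := by
    intro t
    have hk : Tendsto (fun k => t + k) atTop atTop :=
      tendsto_atTop_mono (fun k => Nat.le_add_left k t) tendsto_id
    have h1 := ((hsurv.comp hk).const_sub (survival N x t)).const_mul (rate N ^ t)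
    rw [sub_zero] at h1
    exact le_of_tendsto_of_tendsto' h1 ((hlim.comp hk).sub_const _) (htail t)
  refine squeeze_zero hB htail' ?_
  simpa using hlim.const_sub (expFT N x fun t => rate N ^ t)

lemma expFT_le_of_truncated_le (hN : 3 ≤ N) {x : Finset (Fin N)} {a : Fin N → ℂ}
    (h : Lift N x a) (d b : ℝ) (hb : ∀ t, truncated N (rate N) d (t + 1) x ≤ b) :
    expFT N x (fun t => rate N ^ t) ≤ b := by
  obtain ⟨h1, h2⟩ := tendsto_truncated_parts hN h
  have h3 := h1.add (h2.const_mul d)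
  rw [mul_zero, add_zero] at h3
  exact le_of_tendsto' (h3.comp (Filter.tendsto_add_atTop_nat 1)) hb

lemma le_expFT_of_le_truncated (hN : 3 ≤ N) {x : Finset (Fin N)} {a : Fin N → ℂ}
    (h : Lift N x a) (d b : ℝ) (hb : ∀ t, b ≤ truncated N (rate N) d t x) :
    b ≤ expFT N x (fun t => rate N ^ t) := by
  obtain ⟨h1, h2⟩ := tendsto_truncated_parts hN h
  have h3 := h1.add (h2.const_mul d)
  rw [mul_zero, add_zero] at h3
  exact ge_of_tendsto' h3 hb

/-- Equality means three tokens with vanishing alternating sum. -/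
lemma expFT_eq_iff (hN : 3 ≤ N) {x : Finset (Fin N)} {a : Fin N → ℂ} (h : Lift N x a) :
    expFT N x (fun t => rate N ^ t) = 3 / 2 ↔ x.card = 3 ∧ tokenSum N x a = 0 := by
  have hle := expFT_le_of_truncated_le hN h _ _ fun t => truncated_le hN (t + 1) h
  constructor
  · intro heq
    have hge : 3 / 2 ≤ potential N x a := heq ▸ hle
    have h0 : tokenSum N x a = 0 := by
      rw [← norm_eq_zero, ← sq_eq_zero_iff]
      unfold potential at hge
      nlinarith [sq_nonneg ‖tokenSum N x a‖]
    refine ⟨?_, h0⟩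
    have h1 : x.card ≠ 1 := fun h1 => by
      rw [potential_of_one h h1] at hge
      norm_num at hge
    by_contra h3
    have h5 : (5 : ℝ) ≤ x.card := by
      obtain ⟨k, hk⟩ := h.odd
      exact_mod_cast (by omega : 5 ≤ x.card)
    have h6 := expFT_le_of_truncated_le hN h _ _ fun t =>
      truncated_succ_le hN (fun h' => truncated_le hN t h') h h1
    have h7 := potential_le x a
    have h8 := mul_pos (rate_pos hN) (sin_sq_pos hN)
    nlinarith
  · rintro ⟨h3, h0⟩
    have h1 := le_expFT_of_le_truncated hN h _ _ fun t => le_truncated hN t h h3.le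
    have h2 : potential N x a = 3 / 2 := by simp [potential, h0]
    linarith

/-! ### The equality case -/

lemma zeta_relation_iff (hN : 3 ≤ N) {m n : ℕ} (hmn : m < n) (hn : n < N) :
    1 - zeta N ^ m + zeta N ^ n = 0 ↔ 3 * m = N ∧ 3 * n = 2 * N := by
  have hN0 : (0 : ℝ) < N := by exact_mod_cast (by omega : 0 < N)
  have hp := Real.pi_pos
  have hang : ∀ k : ℕ, k < N → (k * (Real.pi / N) : ℝ) ∈ Set.Icc 0 Real.pi := by
    intro k hk
    have hk' : (k : ℝ) ≤ N := by exact_mod_cast hk.le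
    refine ⟨by positivity, ?_⟩
    rw [← mul_div_assoc, div_le_iff₀ hN0]
    nlinarith
  have hc3 : Real.cos (2 * Real.pi / 3) = -1 / 2 := by
    rw [show 2 * Real.pi / 3 = Real.pi - Real.pi / 3 by ring, Real.cos_pi_sub,
      Real.cos_pi_div_three]
    ring
  rw [zeta_pow, zeta_pow]
  constructor
  · intro h
    have hre := congrArg Complex.re h
    have him := congrArg Complex.im h
    simp only [Complex.add_re, Complex.sub_re, Complex.one_re, Complex.exp_ofReal_mul_I_re,
      Complex.zero_re, Complex.add_im, Complex.sub_im, Complex.one_im,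
      Complex.exp_ofReal_mul_I_im, Complex.zero_im] at hre him
    have h1 := Real.sin_sq_add_cos_sq (m * (Real.pi / N))
    have h2 := Real.sin_sq_add_cos_sq (n * (Real.pi / N))
    have hs : Real.sin (n * (Real.pi / N)) = Real.sin (m * (Real.pi / N)) := by linarith
    have hcn : Real.cos (n * (Real.pi / N)) = Real.cos (m * (Real.pi / N)) - 1 := by linarith
    rw [hs, hcn] at h2
    have hcm : Real.cos (m * (Real.pi / N)) = 1 / 2 := by nlinarith
    have hm := Real.injOn_cos (hang m (by omega)) (⟨by positivity, by linarith⟩ :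
      Real.pi / 3 ∈ Set.Icc 0 Real.pi) (by rw [hcm, Real.cos_pi_div_three])
    have hn := Real.injOn_cos (hang n hn) (⟨by positivity, by linarith⟩ :
      2 * Real.pi / 3 ∈ Set.Icc 0 Real.pi) (by rw [hcn, hcm, hc3]; norm_num)
    field_simp at hm hn
    constructor
    · exact_mod_cast (by linarith : (3 * m : ℝ) = N)
    · exact_mod_cast (by linarith : (3 * n : ℝ) = 2 * N)
  · rintro ⟨hm, hn⟩
    have hm' : (N : ℝ) = 3 * m := by exact_mod_cast hm.symm
    have hn' : (3 : ℝ) * n = 2 * N := by exact_mod_cast hn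
    have e1 : m * (Real.pi / N) = Real.pi / 3 := by field_simp; linarith
    have e2 : n * (Real.pi / N) = Real.pi - Real.pi / 3 := by field_simp; linarith
    rw [e1, e2]
    apply Complex.ext
    · simp only [Complex.add_re, Complex.sub_re, Complex.one_re, Complex.exp_ofReal_mul_I_re,
        Complex.zero_re, Real.cos_pi_sub, Real.cos_pi_div_three]
      norm_num
    · simp only [Complex.zero_im, Complex.add_im, Complex.sub_im, Complex.one_im,
        Complex.exp_ofReal_mul_I_im, Real.sin_pi_sub]
      norm_num

/-- The alternating sum of three tokens, with the phase of the first one factored out. -/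
lemma exists_lift_three {p q r : Fin N} (hpq : p < q) (hqr : q < r) :
    ∃ a, Lift N {p, q, r} a ∧
      tokenSum N {p, q, r} a = zeta N ^ p.val * (1 - zeta N ^ (q.val - p.val) +
        zeta N ^ (r.val - p.val)) := by
  have hcard : ({p, q, r} : Finset (Fin N)).card = 3 :=
    Finset.card_eq_three.mpr ⟨p, q, r, hpq.ne, (hpq.trans hqr).ne, hqr.ne, rfl⟩
  refine ⟨_, lift_rank (hcard ▸ by decide), ?_⟩
  have hp : (({p, q, r} : Finset (Fin N)).filter fun u => u < p) = ∅ := by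
    ext u; simp; grind
  have hq : (({p, q, r} : Finset (Fin N)).filter fun u => u < q) = {p} := by
    ext u; simp; grind
  have hr : (({p, q, r} : Finset (Fin N)).filter fun u => u < r) = {p, q} := by
    ext u; simp; grind
  rw [tokenSum, Finset.sum_insert (by simp; grind), Finset.sum_insert (by simp; grind),
    Finset.sum_singleton, hp, hq, hr, Finset.card_pair hpq.ne]
  rw [mul_add, mul_sub, ← pow_add, ← pow_add, Nat.add_sub_cancel' (Fin.le_def.mp hpq.le),
    Nat.add_sub_cancel' (Fin.le_def.mp (hpq.trans hqr).le)]
  simp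
  ring

lemma equidistant_iff (hN : 3 ≤ N) {p q r : Fin N} (hpq : p < q) (hqr : q < r) :
    1 - zeta N ^ (q.val - p.val) + zeta N ^ (r.val - p.val) = 0 ↔
      3 ∣ N ∧ q.val - p.val = N / 3 ∧ r.val - q.val = N / 3 ∧ N - (r.val - p.val) = N / 3 := by
  rw [Fin.lt_def] at hpq hqr
  rw [zeta_relation_iff hN (by omega) (by omega)]
  omega

lemma exists_sorted {x : Finset (Fin N)} (h : x.card = 3) :
    ∃ p q r : Fin N, p < q ∧ q < r ∧ x = {p, q, r} := by
  refine ⟨x.orderEmbOfFin h 0, x.orderEmbOfFin h 1, x.orderEmbOfFin h 2, by simp, by simp, ?_⟩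
  have h1 := Finset.image_orderEmbOfFin_univ x h
  rw [Fin.univ_succ] at h1
  ext u
  nth_rewrite 1 [← h1]
  simp [Fin.exists_fin_succ, eq_comm]

end

/-- For Herman's protocol on a cycle of `N ≥ 3` nodes started
from any configuration `x` with an odd number of tokens, with
`ε := sin²(π/(2N))` one has `E((1/(1−ε))^T) ≤ 3/2`, with equality if and only
if `3 ∣ N` and `x` consists of exactly three tokens whose three arc-distances
all equal `N/3`. -/
theorem herman_exponential_moment (N : ℕ) [NeZero N] (hN : 3 ≤ N)
    (x : Finset (Fin N)) (hodd : Odd x.card) :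
    expFT N x (fun t => (1 / (1 - Real.sin (Real.pi / (2 * N)) ^ 2)) ^ t) ≤ 3 / 2 ∧
      (expFT N x (fun t => (1 / (1 - Real.sin (Real.pi / (2 * N)) ^ 2)) ^ t) = 3 / 2
        ↔ Equidistant3 N x) := by
  change expFT N x (fun t => rate N ^ t) ≤ 3 / 2 ∧
    (expFT N x (fun t => rate N ^ t) = 3 / 2 ↔ Equidistant3 N x)
  constructor
  · have h := lift_rank hodd
    exact (expFT_le_of_truncated_le hN h _ _ fun t => truncated_le hN (t + 1) h).trans
      (potential_le _ _)
  constructor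
  · intro heq
    have h3 : x.card = 3 := ((expFT_eq_iff hN (lift_rank hodd)).mp heq).1
    obtain ⟨p, q, r, hpq, hqr, rfl⟩ := exists_sorted h3
    obtain ⟨a, ha, hsum⟩ := exists_lift_three hpq hqr
    have h0 := ((expFT_eq_iff hN ha).mp heq).2
    rw [hsum, mul_eq_zero, or_iff_right (pow_ne_zero _ (zeta_ne_zero N)),
      equidistant_iff hN hpq hqr] at h0
    exact ⟨h0.1, p, q, r, hpq, hqr, rfl, h0.2⟩
  · rintro ⟨hdvd, p, q, r, hpq, hqr, rfl, harcs⟩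
    obtain ⟨a, ha, hsum⟩ := exists_lift_three hpq hqr
    rw [expFT_eq_iff hN ha, hsum, (equidistant_iff hN hpq hqr).mpr ⟨hdvd, harcs⟩, mul_zero]
    exact ⟨Finset.card_eq_three.mpr ⟨p, q, r, hpq.ne, (hpq.trans hqr).ne, hqr.ne, rfl⟩, rfl⟩

end HermanProtocol
end

section
/- For all real numbers u, v with −1/3 ≤ u ≤ 2/3, −1/3 ≤ v ≤ 2/3 and u + v ≤ 1/3, one has (9/2)·(u² + v² + (u+v)²) + 27·(u²v + uv²) ≥ (27/(3.6·π²))·[3 − cos(πu) − cos(πv) − cos(π(u+v)) + √3·(sin(πu)·(1 − cos(πv)) + sin(πv)·(1 − cos(πu)))]. -/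
/-!
With `x = 1/3 + u`, `y = 1/3 + v`, `z = 1/3 + w` and `w = -(u + v)`, the trigonometric bracket is
`∑ (1 - cos (π t) + √3 sin (π t))` over `t = u, v, w`, and the left side is
`∑ (9/2 t² - 9 t³)`, because `u³ + v³ + w³ = 3uvw`. After adding the term `-√3 π t`, whose sum
vanishes, the inequality holds term by term as long as every `t` is at most `0.46`
(`termwise_bound`, from Taylor bounds for `sin` and `cos`).

If some `t` exceeds `0.46`, then `27xyz` is small and the left side `1 - 27xyz` is at least `0.77`
(`poly_ge_of_large`). The bracket equals `1 - 8 sin (πx/2) sin (πy/2) sin (πz/2) ≤ 1`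
(`bracket_le_one`), and the constant `27 / (3.6 π²)` is less than `0.77`.
-/

section Taylor

lemma nonneg_of_deriv_nonneg {f f' : ℝ → ℝ} (h0 : f 0 = 0)
    (hd : ∀ x, HasDerivAt f (f' x) x) (hf' : ∀ x, 0 ≤ x → 0 ≤ f' x) {x : ℝ} (hx : 0 ≤ x) :
    0 ≤ f x := by
  have hm : MonotoneOn f (Set.Ici 0) := by
    apply monotoneOn_of_deriv_nonneg (convex_Ici 0)
    · exact fun y _ => (hd y).continuousAt.continuousWithinAt
    · exact fun y _ => (hd y).differentiableAt.differentiableWithinAt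
    · intro y hy
      rw [interior_Ici] at hy
      rw [(hd y).deriv]
      exact hf' y (le_of_lt hy)
  have := hm (Set.mem_Ici.2 le_rfl) (Set.mem_Ici.2 hx) hx
  rwa [h0] at this

lemma sin_ge_cubic {x : ℝ} (hx : 0 ≤ x) : x - x ^ 3 / 6 ≤ Real.sin x := by
  have := nonneg_of_deriv_nonneg (f := fun x => Real.sin x - (x - x ^ 3 / 6))
    (f' := fun x => Real.cos x - (1 - x ^ 2 / 2)) (by simp)
    (fun x => ((Real.hasDerivAt_sin x).sub
      ((hasDerivAt_id x).sub ((hasDerivAt_pow 3 x).div_const 6))).congr_deriv (by norm_num; ring))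
    (fun x _ => by linarith [Real.one_sub_sq_div_two_le_cos (x := x)]) hx
  linarith

lemma cos_le_quartic {x : ℝ} (hx : 0 ≤ x) :
    Real.cos x ≤ 1 - x ^ 2 / 2 + x ^ 4 / 24 := by
  have := nonneg_of_deriv_nonneg (f := fun x => 1 - x ^ 2 / 2 + x ^ 4 / 24 - Real.cos x)
    (f' := fun x => Real.sin x - (x - x ^ 3 / 6)) (by simp)
    (fun x => (((((hasDerivAt_pow 2 x).div_const 2).const_sub 1).add
      ((hasDerivAt_pow 4 x).div_const 24)).sub (Real.hasDerivAt_cos x)).congr_deriv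
        (by norm_num; ring))
    (fun x hx => by linarith [sin_ge_cubic hx]) hx
  linarith

lemma sin_le_quintic {x : ℝ} (hx : 0 ≤ x) :
    Real.sin x ≤ x - x ^ 3 / 6 + x ^ 5 / 120 := by
  have := nonneg_of_deriv_nonneg (f := fun x => x - x ^ 3 / 6 + x ^ 5 / 120 - Real.sin x)
    (f' := fun x => 1 - x ^ 2 / 2 + x ^ 4 / 24 - Real.cos x) (by simp)
    (fun x => ((((hasDerivAt_id x).sub ((hasDerivAt_pow 3 x).div_const 6)).add
      ((hasDerivAt_pow 5 x).div_const 120)).sub (Real.hasDerivAt_sin x)).congr_deriv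
        (by norm_num; ring))
    (fun x hx => by linarith [cos_le_quartic hx]) hx
  linarith

lemma cos_ge_sextic {x : ℝ} (hx : 0 ≤ x) :
    1 - x ^ 2 / 2 + x ^ 4 / 24 - x ^ 6 / 720 ≤ Real.cos x := by
  have := nonneg_of_deriv_nonneg
    (f := fun x => Real.cos x - (1 - x ^ 2 / 2 + x ^ 4 / 24 - x ^ 6 / 720))
    (f' := fun x => x - x ^ 3 / 6 + x ^ 5 / 120 - Real.sin x) (by simp)
    (fun x => ((Real.hasDerivAt_cos x).sub (((((hasDerivAt_pow 2 x).div_const 2).const_sub 1).add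
      ((hasDerivAt_pow 4 x).div_const 24)).sub ((hasDerivAt_pow 6 x).div_const 720))).congr_deriv
        (by norm_num; ring))
    (fun x hx => by linarith [sin_le_quintic hx]) hx
  linarith

end Taylor

lemma sqrt_three_bounds : 1.732 ≤ Real.sqrt 3 ∧ Real.sqrt 3 ≤ 1.7321 := by
  constructor
  · apply Real.le_sqrt_of_sq_le; norm_num
  · rw [Real.sqrt_le_left (by norm_num)]; norm_num

/-- What remains of the termwise bound for `t ≥ 0`, with `y = π t`, after the Taylor estimates
and division by `y²`. -/
lemma quartic_pos {y : ℝ} (h0 : 0 ≤ y) (h1 : y ≤ 1.44514) :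
    0 ≤ 0.1 - (0.382 - 1.732 / 6) * y + y ^ 2 / 24 - 1.7321 * y ^ 3 / 120 - y ^ 4 / 720 := by
  -- Replacing `y⁴` by `1.44514 y³` leaves a cubic.
  have h3 : 0 ≤ y ^ 3 := by positivity
  have h4 : y ^ 4 ≤ 1.44514 * y ^ 3 := by nlinarith
  nlinarith [mul_nonneg (sub_nonneg.2 h1) (sq_nonneg (y - 1)),
    mul_nonneg (sub_nonneg.2 h1) (sq_nonneg (y - 1.2)), sq_nonneg (y - 1.2),
    mul_nonneg h0 (sub_nonneg.2 h1), mul_nonneg h0 (sq_nonneg (y - 1.3))]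

/-- The one-variable inequality. The cutoff `0.46` lies just below the point where it fails and is
large enough for `poly_ge_of_large`. -/
lemma termwise_bound {t : ℝ} (h1 : t ≤ 0.46) :
    1 - Real.cos (Real.pi * t) + Real.sqrt 3 * (Real.sin (Real.pi * t) - Real.pi * t)
      ≤ Real.pi ^ 2 * (0.6 * t ^ 2 - 1.2 * t ^ 3) := by
  obtain ⟨hs1, hs2⟩ := sqrt_three_bounds
  have hpl := Real.pi_gt_d4
  have hpu := Real.pi_lt_d4
  have hs0 : 0 ≤ Real.sqrt 3 := Real.sqrt_nonneg 3
  rcases le_total 0 t with ht | ht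
  · set y := Real.pi * t with hy
    have hy0 : 0 ≤ y := by positivity
    have hy1 : y ≤ 1.44514 := by nlinarith
    have hc := cos_ge_sextic hy0
    have hsn := sin_le_quintic hy0
    have hq := mul_nonneg (sq_nonneg y) (quartic_pos hy0 hy1)
    have hS := mul_le_mul_of_nonneg_left (sub_le_sub_right hsn y) hs0
    have hR : Real.pi ^ 2 * (0.6 * t ^ 2 - 1.2 * t ^ 3) ≥ 0.6 * y ^ 2 - 0.382 * y ^ 3 := by
      rw [hy]
      have : 0 ≤ Real.pi ^ 2 * t ^ 3 := by positivity
      nlinarith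
    have e1 : 1.732 * y ^ 3 ≤ Real.sqrt 3 * y ^ 3 := by gcongr
    have e2 : Real.sqrt 3 * y ^ 5 ≤ 1.7321 * y ^ 5 := by gcongr
    nlinarith
  · obtain ⟨r, rfl⟩ : ∃ r, t = -r := ⟨-t, by ring⟩
    have hr : 0 ≤ r := by linarith
    have hy0 : 0 ≤ Real.pi * r := by positivity
    have hc := Real.one_sub_sq_div_two_le_cos (x := Real.pi * r)
    have hS := mul_le_mul_of_nonneg_left (sub_le_sub_left (sin_ge_cubic hy0) (Real.pi * r)) hs0
    rw [mul_neg, Real.cos_neg, Real.sin_neg]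
    have h2 : 0 ≤ Real.pi ^ 2 * r ^ 2 := by positivity
    have h3 : 0 ≤ Real.pi ^ 2 * r ^ 3 := by positivity
    have h4 : Real.sqrt 3 * Real.pi ≤ 7.2 := by nlinarith
    nlinarith [mul_le_mul_of_nonneg_right h4 h3]

lemma poly_ge_of_large {x y z : ℝ} (hy : 0 ≤ y) (hz : 0 ≤ z) (h : x + y + z = 1)
    (hx : 1 / 3 + 0.46 ≤ x) : 0.77 ≤ 1 - 27 * (x * y * z) := by
  have hx1 : x ≤ 1 := by linarith
  have h1 : 4 * (y * z) ≤ (1 - x) ^ 2 := by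
    have : 1 - x = y + z := by linarith
    rw [this]; nlinarith [sq_nonneg (y - z)]
  have h2 : x * (4 * (y * z)) ≤ x * (1 - x) ^ 2 := by gcongr
  have h3 : x * (1 - x) ^ 2 ≤ 0.034 := by
    nlinarith [mul_nonneg (sub_nonneg.2 hx) (sub_nonneg.2 hx1),
      mul_nonneg (mul_nonneg (sub_nonneg.2 hx) (sub_nonneg.2 hx1)) (sub_nonneg.2 hx1)]
  linarith

/-- The angles of a triangle satisfy `cos α + cos β + cos γ ≥ 1`. Here the angles are `2a`, `2b`
and `π - 2a - 2b`, and the excess over `1` is `4 sin a sin b cos (a + b)`. -/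
lemma bracket_le_one {a b : ℝ} (ha : 0 ≤ a) (hb : 0 ≤ b) (hab : a + b ≤ Real.pi / 2) :
    1 ≤ Real.cos (2 * a) + Real.cos (2 * b) - Real.cos (2 * (a + b)) := by
  have hp := Real.pi_pos
  have h1 : 0 ≤ Real.sin a := Real.sin_nonneg_of_nonneg_of_le_pi ha (by linarith)
  have h2 : 0 ≤ Real.sin b := Real.sin_nonneg_of_nonneg_of_le_pi hb (by linarith)
  have h3 : 0 ≤ Real.cos (a + b) := Real.cos_nonneg_of_neg_pi_div_two_le_of_le (by linarith) hab
  have h4 := mul_nonneg (mul_nonneg h1 h2) h3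
  have key : Real.cos (2 * a) + Real.cos (2 * b) - Real.cos (2 * (a + b))
      = 1 + 4 * (Real.sin a * Real.sin b * Real.cos (a + b)) := by
    have sa := Real.cos_sq' a
    have sb := Real.cos_sq' b
    rw [Real.cos_two_mul, Real.cos_two_mul, Real.cos_two_mul, Real.cos_add]
    linear_combination (2 - 2 * Real.cos b ^ 2) * sa + 2 * Real.sin a ^ 2 * sb
  linarith

/-- For all real `u, v` with `−1/3 ≤ u ≤ 2/3`, `−1/3 ≤ v ≤ 2/3`
and `u + v ≤ 1/3`, one has
`(9/2)(u² + v² + (u+v)²) + 27(u²v + uv²)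
  ≥ (27/(3.6π²))·[3 − cos(πu) − cos(πv) − cos(π(u+v))
      + √3(sin(πu)(1−cos(πv)) + sin(πv)(1−cos(πu)))]`. -/
theorem potential_comparison_real_form (u v : ℝ)
    (hu₁ : -(1 / 3) ≤ u) (hu₂ : u ≤ 2 / 3)
    (hv₁ : -(1 / 3) ≤ v) (hv₂ : v ≤ 2 / 3) (huv : u + v ≤ 1 / 3) :
    9 / 2 * (u ^ 2 + v ^ 2 + (u + v) ^ 2) + 27 * (u ^ 2 * v + u * v ^ 2)
      ≥ 27 / (3.6 * Real.pi ^ 2) *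
        (3 - Real.cos (Real.pi * u) - Real.cos (Real.pi * v)
          - Real.cos (Real.pi * (u + v))
          + Real.sqrt 3 * (Real.sin (Real.pi * u) * (1 - Real.cos (Real.pi * v))
            + Real.sin (Real.pi * v) * (1 - Real.cos (Real.pi * u)))) := by
  have hp := Real.pi_pos
  have hpl := Real.pi_gt_d4
  have hsin : Real.sin (Real.pi * (u + v)) = Real.sin (Real.pi * u) * Real.cos (Real.pi * v)
      + Real.cos (Real.pi * u) * Real.sin (Real.pi * v) := by
    rw [mul_add, Real.sin_add]
  by_cases hsmall : u ≤ 0.46 ∧ v ≤ 0.46 ∧ -(u + v) ≤ 0.46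
  · obtain ⟨h1, h2, h3⟩ := hsmall
    have t1 := termwise_bound h1
    have t2 := termwise_bound h2
    have t3 := termwise_bound h3
    rw [mul_neg, Real.cos_neg, Real.sin_neg, hsin] at t3
    rw [ge_iff_le, div_mul_eq_mul_div, div_le_iff₀ (by positivity)]
    linarith
  · have hpoly : 0.77 ≤ 9 / 2 * (u ^ 2 + v ^ 2 + (u + v) ^ 2) + 27 * (u ^ 2 * v + u * v ^ 2) := by
      by_cases h1 : u ≤ 0.46
      · by_cases h2 : v ≤ 0.46
        · have h3 : 0.46 < -(u + v) := by
            by_contra h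
            exact hsmall ⟨h1, h2, not_lt.1 h⟩
          have := poly_ge_of_large (x := 1 / 3 - (u + v)) (y := 1 / 3 + u) (z := 1 / 3 + v)
            (by linarith) (by linarith) (by ring) (by linarith)
          linarith
        · have := poly_ge_of_large (x := 1 / 3 + v) (y := 1 / 3 + u) (z := 1 / 3 - (u + v))
            (by linarith) (by linarith) (by ring) (by linarith)
          linarith
      · have := poly_ge_of_large (x := 1 / 3 + u) (y := 1 / 3 + v) (z := 1 / 3 - (u + v))
            (by linarith) (by linarith) (by ring) (by linarith)
        linarith
    have hb := bracket_le_one (a := Real.pi * (1 / 3 + u) / 2) (b := Real.pi * (1 / 3 + v) / 2)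
      (by apply div_nonneg (mul_nonneg hp.le (by linarith)); norm_num)
      (by apply div_nonneg (mul_nonneg hp.le (by linarith)); norm_num)
      (by nlinarith)
    have ea : 2 * (Real.pi * (1 / 3 + u) / 2) = Real.pi / 3 + Real.pi * u := by ring
    have eb : 2 * (Real.pi * (1 / 3 + v) / 2) = Real.pi / 3 + Real.pi * v := by ring
    have ec : 2 * (Real.pi * (1 / 3 + u) / 2 + Real.pi * (1 / 3 + v) / 2)
        = Real.pi - (Real.pi / 3 - Real.pi * (u + v)) := by ring
    rw [ea, eb, ec, Real.cos_pi_sub, Real.cos_add, Real.cos_add, Real.cos_sub, Real.cos_pi_div_three,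
      Real.sin_pi_div_three, hsin] at hb
    have hc : 27 / (3.6 * Real.pi ^ 2) ≤ 0.77 := by
      rw [div_le_iff₀ (by positivity)]
      nlinarith
    refine le_trans ?_ hpoly
    refine le_trans (mul_le_of_le_one_right (by positivity) ?_) hc
    linarith
end
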